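/- arXiv:2009.09252 — 2 statements merged into one kernel-verified Lean document; each statement's English description precedes it below -/
import Mathlib

section
/- Fix a positive integer k and let ℍ_k = {(z₁,z₂) ∈ ℂ² : |z₁|^k < |z₂| < 1}. Define 𝒫(z,w) = z₂·conj(w₂) / ((1 - z₂·conj(w₂))² · (z₂·conj(w₂) - (z₁·conj(w₁))^k)²). Then there is a constant C > 0 such that for all w ∈ ℍ_k, ∫_{ℍ_k} |𝒫(z,w)|² dV(z) ≤ C · |w₂|^{-2} (1 - |w₂|²)^{-2} (1 - |w₁|^{2k}/|w₂|²)^{-2}. -/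
open Complex ComplexConjugate MeasureTheory

/-- The fat Hartogs triangle `ℍ_k = {(z₁,z₂) : |z₁|^k < |z₂| < 1}`. -/
def hartogsTriangle (k : ℕ) : Set (ℂ × ℂ) :=
  {z | ‖z.1‖ ^ k < ‖z.2‖ ∧ ‖z.2‖ < 1}

/-- The kernel `𝒫(z,w) = t / ((1-t)² (t - s^k)²)`, `s = z₁·conj w₁`, `t = z₂·conj w₂`. -/
noncomputable def Pker (k : ℕ) (z w : ℂ × ℂ) : ℂ :=
  z.2 * conj w.2 /
    ((1 - z.2 * conj w.2) ^ 2 * (z.2 * conj w.2 - (z.1 * conj w.1) ^ k) ^ 2)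


lemma aux_re (x : ℂ) : ((1 + x) / (1 - x)).re = (1 - ‖x‖ ^ 2) / ‖1 - x‖ ^ 2 := by
  rw [← Complex.normSq_eq_norm_sq, ← Complex.normSq_eq_norm_sq, Complex.div_re, ← add_div]
  congr 1
  simp [Complex.normSq_apply]
  ring

lemma aux_int (m : ℕ) (hm : 1 ≤ m) (c : ℂ) (r : ℝ) (hr : 0 ≤ r) (hq : ‖c‖ * r ^ m < 1) :
    Continuous (fun θ : ℝ => (1 + c * circleMap 0 r θ ^ m) / (1 - c * circleMap 0 r θ ^ m)) ∧
    ∫ θ in (-Real.pi)..Real.pi,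
      ((1 + c * circleMap 0 r θ ^ m) / (1 - c * circleMap 0 r θ ^ m)).re = 2 * Real.pi := by
  have hne : ∀ z : ℂ, ‖z‖ ≤ r → 1 - c * z ^ m ≠ 0 := by
    intro z hz h
    have h1 : c * z ^ m = 1 := by linear_combination -h
    have h2 : ‖c‖ * ‖z‖ ^ m = 1 := by rw [← norm_pow, ← norm_mul, h1, norm_one]
    have : ‖c‖ * ‖z‖ ^ m ≤ ‖c‖ * r ^ m := by gcongr
    linarith
  have hcont : Continuous (fun θ : ℝ => (1 + c * circleMap 0 r θ ^ m) / (1 - c * circleMap 0 r θ ^ m)) := by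
    apply Continuous.div (by fun_prop) (by fun_prop)
    intro θ
    apply hne
    simp [abs_of_nonneg hr]
  refine ⟨hcont, ?_⟩
  set f : ℂ → ℂ := fun z => (1 + c * z ^ m) / (1 - c * z ^ m) with hf
  have hd : DiffContOnCl ℂ f (Metric.ball 0 |r|) := by
    apply DifferentiableOn.diffContOnCl
    intro z hz
    have hz' : ‖z‖ ≤ r := by
      have := Metric.closure_ball_subset_closedBall hz
      simpa [abs_of_nonneg hr] using this
    apply DifferentiableAt.differentiableWithinAt
    rw [hf]
    have := hne z hz'
    fun_prop (disch := assumption)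
  have h1 := hd.circleAverage
  rw [Real.circleAverage_def] at h1
  have h0 : f 0 = 1 := by simp [hf, show m ≠ 0 by omega]
  rw [h0] at h1
  have hper : Function.Periodic (fun θ : ℝ => f (circleMap 0 r θ)) (2 * Real.pi) :=
    fun x => by simp [periodic_circleMap 0 r x]
  have h2 := hper.intervalIntegral_add_eq (-Real.pi) 0
  rw [zero_add, show -Real.pi + 2 * Real.pi = Real.pi by ring] at h2
  have h3 : ∫ θ in (-Real.pi)..Real.pi, f (circleMap 0 r θ) = 2 * Real.pi := by
    rw [h2]
    have hp : (2 * Real.pi) ≠ 0 := by positivity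
    have : (2 * Real.pi) • ((2 * Real.pi)⁻¹ • ∫ θ in (0:ℝ)..(2 * Real.pi), f (circleMap 0 r θ)) = (2 * Real.pi) • (1:ℂ) := by
      rw [h1]
    rw [smul_smul, mul_inv_cancel₀ hp, one_smul] at this
    rw [this]; simp
  have h4 := Complex.reCLM.intervalIntegral_comp_comm (hcont.intervalIntegrable (μ := volume) (-Real.pi) Real.pi)
  simp only [Complex.reCLM_apply] at h4
  rw [h4]
  have := congrArg Complex.re h3
  simp only [hf] at this
  rw [this]
  simp

lemma aux_ang (m : ℕ) (hm : 1 ≤ m) (c : ℂ) (r : ℝ) (hr : 0 ≤ r) (hq : ‖c‖ * r ^ m < 1) :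
    ∫⁻ θ in Set.Ioo (-Real.pi) Real.pi,
      ENNReal.ofReal ((‖1 - c * circleMap 0 r θ ^ m‖ ^ 4)⁻¹) ≤
    ENNReal.ofReal (8 * Real.pi * ((1 - r ^ (2 * m) * ‖c‖ ^ 2) ^ 3)⁻¹) := by
  obtain ⟨hc, hi⟩ := aux_int m hm c r hr hq
  set q := ‖c‖ * r ^ m with hqd
  have hq0 : 0 ≤ q := by positivity
  have hqq : r ^ (2 * m) * ‖c‖ ^ 2 = q ^ 2 := by rw [hqd]; ring
  rw [hqq]
  have hs : 0 < 1 - q ^ 2 := by nlinarith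
  have hx : ∀ θ : ℝ, ‖c * circleMap 0 r θ ^ m‖ = q := by
    intro θ; simp [abs_of_nonneg hr, hqd]
  have hpt : ∀ θ : ℝ, (‖1 - c * circleMap 0 r θ ^ m‖ ^ 4)⁻¹ ≤
      4 * ((1 - q ^ 2) ^ 3)⁻¹ * ((1 + c * circleMap 0 r θ ^ m) / (1 - c * circleMap 0 r θ ^ m)).re := by
    intro θ
    rw [aux_re, hx]
    have hN : 1 - q ≤ ‖1 - c * circleMap 0 r θ ^ m‖ := by
      have := norm_sub_norm_le (1:ℂ) (c * circleMap 0 r θ ^ m)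
      rwa [hx, norm_one] at this
    set N := ‖1 - c * circleMap 0 r θ ^ m‖
    have hNp : 0 < N := by linarith
    have h5 : (1 - q ^ 2) ≤ 2 * N := by nlinarith
    have h6 : (1 - q ^ 2) ^ 2 ≤ 4 * N ^ 2 := by nlinarith
    have : 4 * ((1 - q ^ 2) ^ 3)⁻¹ * ((1 - q ^ 2) / N ^ 2) = (4 * N ^ 2 / (1 - q ^ 2) ^ 2) * (N ^ 4)⁻¹ := by
      field_simp
    rw [this]
    have h7 : 1 ≤ 4 * N ^ 2 / (1 - q ^ 2) ^ 2 := by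
      rw [le_div_iff₀ (by positivity)]; linarith
    have : 0 ≤ (N ^ 4)⁻¹ := by positivity
    nlinarith
  have hcr : Continuous (fun θ : ℝ => 4 * ((1 - q ^ 2) ^ 3)⁻¹ * ((1 + c * circleMap 0 r θ ^ m) / (1 - c * circleMap 0 r θ ^ m)).re) := by
    apply continuous_const.mul (Complex.continuous_re.comp hc)
  calc _ ≤ ∫⁻ θ in Set.Ioo (-Real.pi) Real.pi, ENNReal.ofReal (4 * ((1 - q ^ 2) ^ 3)⁻¹ * ((1 + c * circleMap 0 r θ ^ m) / (1 - c * circleMap 0 r θ ^ m)).re) :=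
        lintegral_mono fun θ => ENNReal.ofReal_le_ofReal (hpt θ)
    _ = ENNReal.ofReal (∫ θ in Set.Ioo (-Real.pi) Real.pi, 4 * ((1 - q ^ 2) ^ 3)⁻¹ * ((1 + c * circleMap 0 r θ ^ m) / (1 - c * circleMap 0 r θ ^ m)).re) := by
        rw [ofReal_integral_eq_lintegral_ofReal]
        · exact (hcr.integrableOn_Icc (a := -Real.pi) (b := Real.pi)).mono_set Set.Ioo_subset_Icc_self
        · exact Filter.Eventually.of_forall fun θ => le_trans (by positivity) (hpt θ)
    _ ≤ _ := by
        apply ENNReal.ofReal_le_ofReal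
        rw [← integral_Ioc_eq_integral_Ioo, ← intervalIntegral.integral_of_le (by linarith [Real.pi_pos]), intervalIntegral.integral_const_mul, hi]
        apply le_of_eq; ring

lemma aux_rad (m : ℕ) (hm : 1 ≤ m) (y R α : ℝ) (hy : 0 ≤ y) (hR : 0 < R) (hq : R ^ (2 * m) * y < 1)
    (h0 : 0 < α) (h2 : α ≤ 2) :
    ∫⁻ r in Set.Ioo 0 R, ENNReal.ofReal (r ^ (α - 1) * ((1 - r ^ (2 * m) * y) ^ 3)⁻¹) ≤
    ENNReal.ofReal (α⁻¹ * R ^ α * ((1 - R ^ (2 * m) * y) ^ 2)⁻¹) := by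
  have hp : ∀ r ∈ Set.Icc 0 R, 0 < 1 - r ^ (2 * m) * y := by
    intro r hr
    have : r ^ (2 * m) * y ≤ R ^ (2 * m) * y := by
      gcongr; exact hr.1; exact hr.2
    linarith
  set G : ℝ → ℝ := fun r => α⁻¹ * r ^ α * ((1 - r ^ (2 * m) * y) ^ 2)⁻¹ with hG
  set G' : ℝ → ℝ := fun r => α⁻¹ * (r ^ (α - 1) * (α + (4 * m - α) * (r ^ (2 * m) * y)) * ((1 - r ^ (2 * m) * y) ^ 3)⁻¹) with hG'
  have hcont : ContinuousOn G (Set.Icc 0 R) := by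
    apply ContinuousOn.mul
    · apply ContinuousOn.mul continuousOn_const
      exact (Real.continuous_rpow_const h0.le).continuousOn
    · apply ContinuousOn.inv₀ (by fun_prop)
      intro r hr
      have := hp r hr
      positivity
  have hm' : (1:ℝ) ≤ m := by exact_mod_cast hm
  have hle : ∀ r ∈ Set.Ioo 0 R, r ^ (α - 1) * ((1 - r ^ (2 * m) * y) ^ 3)⁻¹ ≤ G' r := by
    intro r hr
    have h1 := hp r ⟨hr.1.le, hr.2.le⟩
    have h3 : 0 < r := hr.1
    have h4 : 0 ≤ (4 * m - α) * (r ^ (2 * m) * y) := mul_nonneg (by linarith) (by positivity)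
    have h5 : 0 ≤ r ^ (α - 1) * ((1 - r ^ (2 * m) * y) ^ 3)⁻¹ := by positivity
    have : G' r = (α⁻¹ * (α + (4 * m - α) * (r ^ (2 * m) * y))) * (r ^ (α - 1) * ((1 - r ^ (2 * m) * y) ^ 3)⁻¹) := by
      simp only [hG']; ring
    rw [this]
    apply le_mul_of_one_le_left h5
    rw [inv_mul_eq_div, le_div_iff₀ h0]; linarith
  have hpos : ∀ r ∈ Set.Ioo 0 R, 0 ≤ G' r := by
    intro r hr
    refine le_trans ?_ (hle r hr)
    have h1 := hp r ⟨hr.1.le, hr.2.le⟩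
    have h3 : 0 < r := hr.1
    positivity
  have hder : ∀ r ∈ Set.Ioo 0 R, HasDerivAt G (G' r) r := by
    intro r hr
    have h1 := hp r ⟨hr.1.le, hr.2.le⟩
    have h3 : 0 < r := hr.1
    have d1 : HasDerivAt (fun r : ℝ => r ^ α) (α * r ^ (α - 1)) r :=
      Real.hasDerivAt_rpow_const (Or.inl h3.ne')
    have d2 : HasDerivAt (fun r : ℝ => 1 - r ^ (2 * m) * y) (-((2 * m : ℕ) * r ^ (2 * m - 1) * y)) r := by
      simpa using ((hasDerivAt_pow (2 * m) r).mul_const y).const_sub 1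
    have d3 := ((d1.const_mul α⁻¹).mul ((d2.pow 2).inv (pow_ne_zero 2 h1.ne')))
    have e1 : r ^ α = r ^ (α - 1) * r := by
      rw [← Real.rpow_add_one h3.ne']; simp
    have e2 : r ^ (2 * m) = r ^ (2 * m - 1) * r := by
      rw [← pow_succ]; congr 1; omega
    refine d3.congr_deriv ?_
    symm
    simp only [hG', Pi.pow_apply, Pi.inv_apply]
    rw [e1]
    generalize r ^ (α - 1) = A
    have e3 : (4 * m - α) * (r ^ (2 * m) * y) =  4 * m * (r ^ (2 * m - 1) * r) * y - α * (r ^ (2 * m) * y) := by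
      rw [e2]; ring
    rw [e3]
    generalize r ^ (2 * m - 1) = B
    generalize r ^ (2 * m) * y = D at h1
    have : 1 - D ≠ 0 := h1.ne'
    push_cast
    field_simp
    ring
  have hint : IntegrableOn G' (Set.Ioc 0 R) :=
    intervalIntegral.integrableOn_deriv_of_nonneg hcont hder hpos
  have hI : IntervalIntegrable G' volume 0 R := by
    rwa [intervalIntegrable_iff_integrableOn_Ioc_of_le hR.le]
  have hF := intervalIntegral.integral_eq_sub_of_hasDerivAt_of_le hR.le hcont hder hI
  calc _ ≤ ∫⁻ r in Set.Ioo 0 R, ENNReal.ofReal (G' r) :=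
        setLIntegral_mono' measurableSet_Ioo fun r hr => ENNReal.ofReal_le_ofReal (hle r hr)
    _ = ENNReal.ofReal (∫ r in Set.Ioo 0 R, G' r) := by
        rw [ofReal_integral_eq_lintegral_ofReal]
        · exact hint.mono_set Set.Ioo_subset_Ioc_self
        · exact (ae_restrict_mem measurableSet_Ioo).mono hpos
    _ ≤ _ := by
        apply ENNReal.ofReal_le_ofReal
        rw [← integral_Ioc_eq_integral_Ioo, ← intervalIntegral.integral_of_le hR.le, hF]
        simp [hG, Real.zero_rpow h0.ne']

lemma aux_disc (m : ℕ) (hm : 1 ≤ m) (c : ℂ) (R α : ℝ) (hR : 0 < R) (hq : ‖c‖ * R ^ m < 1)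
    (h0 : 0 < α) (h2 : α ≤ 2) :
    ∫⁻ z in {z : ℂ | ‖z‖ < R}, ENNReal.ofReal (‖z‖ ^ (α - 2) * (‖1 - c * z ^ m‖ ^ 4)⁻¹) ≤
    ENNReal.ofReal (8 * Real.pi * α⁻¹ * R ^ α * ((1 - R ^ (2 * m) * ‖c‖ ^ 2) ^ 2)⁻¹) := by
  have hms : MeasurableSet {z : ℂ | ‖z‖ < R} := measurableSet_lt measurable_norm measurable_const
  rw [← lintegral_indicator hms, ← Complex.lintegral_comp_polarCoord_symm, polarCoord_target,
    Measure.volume_eq_prod, ← Measure.prod_restrict]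
  have hmeas : Measurable (fun z : ℂ => Set.indicator {z : ℂ | ‖z‖ < R} (fun z => ENNReal.ofReal (‖z‖ ^ (α - 2) * (‖1 - c * z ^ m‖ ^ 4)⁻¹)) z) := by
    apply Measurable.indicator _ hms
    fun_prop
  have hcm : ∀ p : ℝ × ℝ, Complex.polarCoord.symm p = circleMap 0 p.1 p.2 := by
    intro p; simp [circleMap, Complex.exp_mul_I]
  simp_rw [hcm]
  rw [lintegral_prod]
  swap
  · apply Measurable.aemeasurable
    simp only [smul_eq_mul]
    exact Measurable.mul (by fun_prop) (hmeas.comp (show Continuous (fun p : ℝ × ℝ => circleMap 0 p.1 p.2) by fun_prop).measurable)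
  have hq2 : R ^ (2 * m) * ‖c‖ ^ 2 < 1 := by
    have : R ^ (2 * m) * ‖c‖ ^ 2 = (‖c‖ * R ^ m) ^ 2 := by ring
    rw [this]
    have : 0 ≤ ‖c‖ * R ^ m := by positivity
    nlinarith
  calc _ ≤ ∫⁻ r in Set.Ioi (0:ℝ), Set.indicator (Set.Ioo 0 R) (fun r => ENNReal.ofReal (8 * Real.pi) * ENNReal.ofReal (r ^ (α - 1) * ((1 - r ^ (2 * m) * ‖c‖ ^ 2) ^ 3)⁻¹)) r := by
        apply setLIntegral_mono' measurableSet_Ioi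
        intro r hr
        have hr : 0 < r := hr
        by_cases hrR : r < R
        · have hmem : ∀ θ, circleMap 0 r θ ∈ {z : ℂ | ‖z‖ < R} := by
            intro θ; simpa [abs_of_pos hr] using hrR
          rw [Set.indicator_of_mem (show r ∈ Set.Ioo 0 R from ⟨hr, hrR⟩)]
          simp only [Set.indicator_of_mem (hmem _)]
          have hn : ∀ θ, ‖circleMap 0 r θ‖ = r := by intro θ; simp [abs_of_pos hr]
          have hre : ∀ θ, ENNReal.ofReal r • ENNReal.ofReal (‖circleMap 0 r θ‖ ^ (α - 2) * (‖1 - c * circleMap 0 r θ ^ m‖ ^ 4)⁻¹) = ENNReal.ofReal (r ^ (α - 1)) * ENNReal.ofReal ((‖1 - c * circleMap 0 r θ ^ m‖ ^ 4)⁻¹) := by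
            intro θ
            rw [hn, smul_eq_mul, ← ENNReal.ofReal_mul hr.le, ← ENNReal.ofReal_mul (by positivity), ← mul_assoc]
            congr 2
            rw [mul_comm, ← Real.rpow_add_one hr.ne']; congr 1; ring
          simp_rw [hre]
          rw [lintegral_const_mul' _ _ ENNReal.ofReal_ne_top]
          have hrq : ‖c‖ * r ^ m < 1 := lt_of_le_of_lt (by gcongr) hq
          grw [aux_ang m hm c r hr.le hrq]
          rw [← ENNReal.ofReal_mul (by positivity), ← ENNReal.ofReal_mul (by positivity)]
          apply le_of_eq; congr 1; ring
        · have hmem : ∀ θ, circleMap 0 r θ ∉ {z : ℂ | ‖z‖ < R} := by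
            intro θ; simpa [abs_of_pos hr] using hrR
          simp [Set.indicator_of_notMem (hmem _)]
    _ = ENNReal.ofReal (8 * Real.pi) * ∫⁻ r in Set.Ioo (0:ℝ) R, ENNReal.ofReal (r ^ (α - 1) * ((1 - r ^ (2 * m) * ‖c‖ ^ 2) ^ 3)⁻¹) := by
        rw [lintegral_indicator measurableSet_Ioo, Measure.restrict_restrict measurableSet_Ioo,
          Set.inter_eq_left.mpr Set.Ioo_subset_Ioi_self, lintegral_const_mul' _ _ ENNReal.ofReal_ne_top]
    _ ≤ _ := by
        grw [aux_rad m hm (‖c‖ ^ 2) R α (by positivity) hR hq2 h0 h2]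
        rw [← ENNReal.ofReal_mul (by positivity)]
        apply le_of_eq; congr 1; ring

lemma Pker_sq (k : ℕ) (z w : ℂ × ℂ) (hz : z.2 ≠ 0) (hw : w.2 ≠ 0) :
    ‖Pker k z w‖ ^ 2 = ((‖z.2‖ ^ 2)⁻¹ * (‖w.2‖ ^ 2)⁻¹ * (‖1 - conj w.2 * z.2 ^ 1‖ ^ 4)⁻¹) *
      (‖1 - (conj w.1 ^ k / (z.2 * conj w.2)) * z.1 ^ k‖ ^ 4)⁻¹ := by
  have hw' : conj w.2 ≠ 0 := by simpa using hw
  have e : z.2 * conj w.2 - (z.1 * conj w.1) ^ k =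
      (z.2 * conj w.2) * (1 - (conj w.1 ^ k / (z.2 * conj w.2)) * z.1 ^ k) := by
    field_simp; ring
  have e2 : 1 - conj w.2 * z.2 ^ 1 = 1 - z.2 * conj w.2 := by ring
  rw [Pker, e, e2]
  simp only [norm_div, norm_mul, norm_pow, RCLike.norm_conj]
  have h1 : ‖z.2‖ ≠ 0 := by simpa using hz
  have h2 : ‖w.2‖ ≠ 0 := by simpa using hw
  generalize ‖1 - (conj w.1 ^ k / (z.2 * conj w.2)) * z.1 ^ k‖ = X
  generalize ‖1 - z.2 * conj w.2‖ = Y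
  rw [div_pow, div_eq_mul_inv]
  simp only [mul_pow, mul_inv, ← pow_mul]
  field_simp

lemma aux_main (k : ℕ) (hk : 1 ≤ k) (w : ℂ × ℂ) (hw : w ∈ hartogsTriangle k) :
    ∫⁻ z in hartogsTriangle k, ENNReal.ofReal (‖Pker k z w‖ ^ 2) ≤
      ENNReal.ofReal ((16 * Real.pi ^ 2 * k) * (‖w.2‖ ^ 2)⁻¹ * ((1 - ‖w.2‖ ^ 2) ^ 2)⁻¹ *
          ((1 - ‖w.1‖ ^ (2 * k) / ‖w.2‖ ^ 2) ^ 2)⁻¹) := by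
  have hH : MeasurableSet (hartogsTriangle k) :=
    (measurableSet_lt (f := fun z : ℂ × ℂ => ‖z.1‖ ^ k) (g := fun z : ℂ × ℂ => ‖z.2‖)
      (by fun_prop) (by fun_prop)).inter
    (measurableSet_lt (f := fun z : ℂ × ℂ => ‖z.2‖) (g := fun _ : ℂ × ℂ => (1 : ℝ))
      (by fun_prop) (by fun_prop))
  obtain ⟨hw1, hw2⟩ := hw
  have ha : 0 < ‖w.2‖ := lt_of_le_of_lt (by positivity) hw1
  have ha0 : w.2 ≠ 0 := by simpa using ha
  have hk' : (1:ℝ) ≤ k := by exact_mod_cast hk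
  have hk0 : k ≠ 0 := by omega
  have hM : Measurable (fun z => ENNReal.ofReal (‖Pker k z w‖ ^ 2)) := by
    unfold Pker; fun_prop
  set K : ℝ := 8 * Real.pi * 2⁻¹ * (‖w.2‖ ^ 2)⁻¹ * ((1 - ‖w.1‖ ^ (2 * k) / ‖w.2‖ ^ 2) ^ 2)⁻¹ with hK
  have hK0 : 0 ≤ K := by positivity
  rw [← lintegral_indicator hH, Measure.volume_eq_prod,
    lintegral_prod_symm _ (hM.indicator hH).aemeasurable]
  have hD : MeasurableSet {z : ℂ | ‖z‖ < 1} := measurableSet_lt measurable_norm measurable_const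
  calc _ ≤ ∫⁻ y : ℂ, Set.indicator {z : ℂ | ‖z‖ < 1} (fun y => ENNReal.ofReal K *
          ENNReal.ofReal (‖y‖ ^ ((2 / k : ℝ) - 2) * (‖1 - conj w.2 * y ^ 1‖ ^ 4)⁻¹)) y := by
        apply lintegral_mono
        intro y
        by_cases hy : ‖y‖ < 1 ∧ y ≠ 0
        · obtain ⟨hy1, hy0⟩ := hy
          have hyn : 0 < ‖y‖ := norm_pos_iff.mpr hy0
          simp only
          rw [Set.indicator_of_mem (show y ∈ {z : ℂ | ‖z‖ < 1} from hy1)]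
          set R : ℝ := ‖y‖ ^ ((1:ℝ) / k) with hR
          have hRp : 0 < R := by positivity
          have hRk : R ^ k = ‖y‖ := by
            rw [hR, ← Real.rpow_natCast, ← Real.rpow_mul hyn.le]
            rw [one_div, inv_mul_cancel₀ (by positivity), Real.rpow_one]
          have hR2 : R ^ (2:ℝ) = ‖y‖ ^ (2 / k : ℝ) := by
            rw [hR, ← Real.rpow_mul hyn.le]; congr 1; ring
          set c : ℂ := conj w.1 ^ k / (y * conj w.2) with hc
          have hcn : ‖c‖ = ‖w.1‖ ^ k / (‖y‖ * ‖w.2‖) := by simp [hc]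
          set A : ℝ := (‖y‖ ^ 2)⁻¹ * (‖w.2‖ ^ 2)⁻¹ * (‖1 - conj w.2 * y ^ 1‖ ^ 4)⁻¹ with hA
          have hA0 : 0 ≤ A := by positivity
          have hin : ∀ x : ℂ, (hartogsTriangle k).indicator (fun z => ENNReal.ofReal (‖Pker k z w‖ ^ 2)) (x, y)
              = Set.indicator {z : ℂ | ‖z‖ < R} (fun x => ENNReal.ofReal A * ENNReal.ofReal (‖x‖ ^ ((2:ℝ) - 2) * (‖1 - c * x ^ k‖ ^ 4)⁻¹)) x := by
            intro x
            have hiff : (x, y) ∈ hartogsTriangle k ↔ x ∈ {z : ℂ | ‖z‖ < R} := by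
              simp only [hartogsTriangle, Set.mem_ofPred_eq, hy1, and_true]
              rw [← hRk]
              exact pow_lt_pow_iff_left₀ (norm_nonneg _) hRp.le hk0
            by_cases hx : x ∈ {z : ℂ | ‖z‖ < R}
            · rw [Set.indicator_of_mem hx, Set.indicator_of_mem (hiff.mpr hx), Pker_sq k (x, y) w hy0 ha0,
                ← ENNReal.ofReal_mul hA0]
              simp [hA, hc]
            · rw [Set.indicator_of_notMem hx, Set.indicator_of_notMem (fun h => hx (hiff.mp h))]
          simp_rw [hin]
          have hq : ‖c‖ * R ^ k < 1 := by
            rw [hRk, hcn]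
            have : ‖w.1‖ ^ k / (‖y‖ * ‖w.2‖) * ‖y‖ = ‖w.1‖ ^ k / ‖w.2‖ := by field_simp
            rw [this, div_lt_one ha]; exact hw1
          have hq2 : R ^ (2 * k) * ‖c‖ ^ 2 = ‖w.1‖ ^ (2 * k) / ‖w.2‖ ^ 2 := by
            rw [mul_comm 2 k, pow_mul, hRk, hcn]
            field_simp
            ring
          rw [lintegral_indicator (measurableSet_lt measurable_norm measurable_const),
            lintegral_const_mul' _ _ ENNReal.ofReal_ne_top]
          grw [aux_disc k hk c R 2 hRp hq (by norm_num) le_rfl]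
          rw [← ENNReal.ofReal_mul hA0, ← ENNReal.ofReal_mul hK0, hq2, hR2, Real.rpow_sub hyn]
          apply le_of_eq; congr 1
          simp only [hA, hK, Real.rpow_two]
          ring
        · have : ∀ x : ℂ, (hartogsTriangle k).indicator (fun z => ENNReal.ofReal (‖Pker k z w‖ ^ 2)) (x, y) = 0 := by
            intro x
            apply Set.indicator_of_notMem
            rintro ⟨h1, h2⟩
            apply hy
            refine ⟨h2, ?_⟩
            rintro rfl
            simp only [norm_zero] at h1
            exact absurd h1 (not_lt.mpr (by positivity))
          simp only [this, lintegral_zero, zero_le]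
    _ = ENNReal.ofReal K * ∫⁻ y in {z : ℂ | ‖z‖ < 1}, ENNReal.ofReal (‖y‖ ^ ((2 / k : ℝ) - 2) * (‖1 - conj w.2 * y ^ 1‖ ^ 4)⁻¹) := by
        rw [lintegral_indicator hD, lintegral_const_mul' _ _ ENNReal.ofReal_ne_top]
    _ ≤ _ := by
        grw [aux_disc 1 le_rfl (conj w.2) 1 (2 / k) one_pos (by simpa using hw2) (by positivity)
          (by rw [div_le_iff₀ (by positivity)]; linarith)]
        rw [← ENNReal.ofReal_mul hK0]
        apply le_of_eq; congr 1
        simp only [Real.one_rpow, one_pow, one_mul, mul_one, RCLike.norm_conj, hK, inv_div]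
        ring

/-- `∫_{ℍ_k} |𝒫(z,w)|² dV(z) ≤ C |w₂|⁻² (1-|w₂|²)⁻² (1-|w₁|^{2k}/|w₂|²)⁻²`. -/
theorem stmt3 (k : ℕ) (hk : 1 ≤ k) :
    ∃ C : ℝ, 0 < C ∧ ∀ w ∈ hartogsTriangle k,
      (∫ z in hartogsTriangle k, ‖Pker k z w‖ ^ 2) ≤
        C * (‖w.2‖ ^ 2)⁻¹ * ((1 - ‖w.2‖ ^ 2) ^ 2)⁻¹ *
          ((1 - ‖w.1‖ ^ (2 * k) / ‖w.2‖ ^ 2) ^ 2)⁻¹ := by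
  refine ⟨16 * Real.pi ^ 2 * k, by have : 0 < k := hk; positivity, fun w hw => ?_⟩
  have hM : Measurable (fun z => ‖Pker k z w‖ ^ 2) := by
    unfold Pker; fun_prop
  rw [integral_eq_lintegral_of_nonneg_ae (Filter.Eventually.of_forall fun z => by positivity)
    hM.aestronglyMeasurable]
  apply ENNReal.toReal_le_of_le_ofReal (by positivity)
  exact aux_main k hk w hw
end

section
/- Let k ∈ ℤ⁺ and consider the measure dμ(z) = |z₁|^{2k-2} dV(z) on ℍ_k = {(z₁,z₂) : |z₁|^k < |z₂| < 1}. Then the function T_μ(w) = ∫_{ℍ_k} |𝒫(z,w)|²/K(w,w) dμ(z), with 𝒫(z,w) = z₂conj(w₂)/((1-z₂conj(w₂))²(z₂conj(w₂)-(z₁conj(w₁))^k)²) and K the Bergman kernel of ℍ_k, satisfies c₁ ≤ T_μ(w) ≤ c₂ for all w ∈ ℍ_k and some constants 0 < c₁ ≤ c₂ depending only on k. -/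
open Complex ComplexConjugate MeasureTheory

/-- `p_k(s) = Σ_{j=1}^{k-1} j(k-j) s^{j-1}` (`p₁ ≡ 0`). -/
noncomputable def pPoly (k : ℕ) (s : ℂ) : ℂ :=
  ∑ j ∈ Finset.Ico 1 k, ((j * (k - j) : ℕ) : ℂ) * s ^ (j - 1)

/-- `q_k(s) = Σ_{j=1}^{k} (j² + (k-j)² s^k) s^{j-1}`. -/
noncomputable def qPoly (k : ℕ) (s : ℂ) : ℂ :=
  ∑ j ∈ Finset.Icc 1 k, (((j ^ 2 : ℕ) : ℂ) + (((k - j) ^ 2 : ℕ) : ℂ) * s ^ k) * s ^ (j - 1)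

/-- Edholm's formula for the Bergman kernel of `ℍ_k`. -/
noncomputable def bergmanHk (k : ℕ) (z w : ℂ × ℂ) : ℂ :=
  let s := z.1 * conj w.1
  let t := z.2 * conj w.2
  (pPoly k s * t ^ 2 + qPoly k s * t + s ^ k * pPoly k s) /
    ((k : ℂ) * (Real.pi : ℂ) ^ 2 * (1 - t) ^ 2 * (t - s ^ k) ^ 2)

/-- The function `T_μ` for `dμ(z) = |z₁|^{2k-2} dV(z)`:
`T_μ(w) = ∫_{ℍ_k} |𝒫(z,w)|²/K(w,w) |z₁|^{2k-2} dV(z)`. -/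
noncomputable def Tmu (k : ℕ) (w : ℂ × ℂ) : ℝ :=
  ∫ z in hartogsTriangle k,
    ‖Pker k z w‖ ^ 2 / (bergmanHk k w w).re * ‖z.1‖ ^ (2 * k - 2)


lemma kernel_alg (ζ : ℂ) (h : ‖ζ‖ < 1) :
    1 / ‖1 - ζ‖ ^ 4 = (((1 - ‖ζ‖ ^ 2 : ℝ) : ℂ) * ((1 - ζ)⁻¹ ^ 2 + ζ ^ 2 * (1 - ζ)⁻¹ ^ 2)
      + 2 * (ζ + ((‖ζ‖ ^ 2 : ℝ) : ℂ) * (1 - ζ)⁻¹ + ζ ^ 2 * (1 - ζ)⁻¹)).re / (1 - ‖ζ‖ ^ 2) ^ 3 := by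
  have h1 : 0 < 1 - ‖ζ‖ ^ 2 := by nlinarith [norm_nonneg ζ]
  have e1 : ‖ζ‖ ^ 2 = ζ.re * ζ.re + ζ.im * ζ.im := by
    rw [← Complex.normSq_eq_norm_sq, Complex.normSq_apply]
  have e2 : ‖1 - ζ‖ ^ 4 = ((1 - ζ.re) * (1 - ζ.re) + ζ.im * ζ.im) ^ 2 := by
    rw [show ‖1 - ζ‖ ^ 4 = (‖1 - ζ‖ ^ 2) ^ 2 by ring, ← Complex.normSq_eq_norm_sq,
      Complex.normSq_apply]; simp
  have hD : 0 < (1 - ζ.re) * (1 - ζ.re) + ζ.im * ζ.im := by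
    have : ζ.re < 1 := lt_of_le_of_lt (Complex.re_le_norm ζ) h
    nlinarith [mul_self_nonneg ζ.im, mul_pos (sub_pos.2 this) (sub_pos.2 this)]
  have eA : (1 - ζ)⁻¹ = ⟨(1 - ζ.re) / ((1 - ζ.re) * (1 - ζ.re) + ζ.im * ζ.im),
      ζ.im / ((1 - ζ.re) * (1 - ζ.re) + ζ.im * ζ.im)⟩ := by
    apply Complex.ext <;> simp [Complex.inv_re, Complex.inv_im, Complex.normSq_apply]
  rw [eA, e2]
  rw [e1] at h1 ⊢
  generalize hx : ζ.re = x at *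
  generalize hy : ζ.im = y at *
  generalize hd : (1 - x) * (1 - x) + y * y = D at *
  rw [div_eq_div_iff (by positivity) (by positivity)]
  simp [pow_two, hx, hy]
  field_simp
  subst hd
  ring

lemma circ (k : ℕ) (hk : 1 ≤ k) (c : ℂ) (r : ℝ) (hr : 0 < r) (h : ‖c‖ * r ^ k < 1) :
    ∫⁻ θ in Set.Ioo (-Real.pi) Real.pi,
      ENNReal.ofReal (1 / ‖1 - c * (circleMap 0 r θ) ^ k‖ ^ 4) =
    ENNReal.ofReal (2 * Real.pi * ((1 + ‖c‖ ^ 2 * r ^ (2 * k)) / (1 - ‖c‖ ^ 2 * r ^ (2 * k)) ^ 3)) := by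
  set ρ : ℝ := ‖c‖ ^ 2 * r ^ (2 * k) with hρ
  have hρ' : (‖c‖ * r ^ k) ^ 2 = ρ := by rw [hρ]; ring
  have hnb : ∀ z ∈ Metric.closedBall (0:ℂ) |r|, ‖c * z ^ k‖ < 1 := by
    intro z hz
    rw [abs_of_pos hr] at hz
    have : ‖z‖ ≤ r := by simpa using hz
    rw [norm_mul, norm_pow]
    refine lt_of_le_of_lt ?_ h
    gcongr
  have hne : ∀ z ∈ Metric.closedBall (0:ℂ) |r|, 1 - c * z ^ k ≠ 0 := by
    intro z hz h0
    have := hnb z hz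
    rw [← sub_eq_zero.1 h0] at this
    simp at this
  have hn : ∀ z ∈ Metric.sphere (0:ℂ) |r|, ‖c * z ^ k‖ ^ 2 = ρ := by
    intro z hz
    rw [abs_of_pos hr] at hz
    have : ‖z‖ = r := by simpa using hz
    rw [norm_mul, norm_pow, this, hρ']
  set G : ℂ → ℂ := fun z => ((1 - ρ : ℝ) : ℂ) * ((1 - c * z ^ k)⁻¹ ^ 2 + (c * z ^ k) ^ 2 * (1 - c * z ^ k)⁻¹ ^ 2)
      + 2 * (c * z ^ k + ((ρ : ℝ) : ℂ) * (1 - c * z ^ k)⁻¹ + (c * z ^ k) ^ 2 * (1 - c * z ^ k)⁻¹) with hG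
  have hdiff : ∀ z ∈ Metric.closedBall (0:ℂ) |r|, DifferentiableAt ℂ G z := by
    intro z hz
    have := hne z hz
    rw [hG]
    fun_prop (disch := assumption)
  have hDC : DiffContOnCl ℂ G (Metric.ball 0 |r|) := by
    apply DifferentiableOn.diffContOnCl
    intro z hz
    exact (hdiff z (Metric.closure_ball_subset_closedBall hz)).differentiableWithinAt
  have hav := hDC.circleAverage
  have hG0 : G 0 = ((1 + ρ : ℝ) : ℂ) := by
    have : k ≠ 0 := by omega
    simp [hG, this]; ring
  have hmem : ∀ θ, circleMap (0:ℂ) r θ ∈ Metric.sphere (0:ℂ) |r| := fun θ => circleMap_mem_sphere' 0 r θ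
  have hpt : ∀ θ, 1 / ‖1 - c * (circleMap 0 r θ) ^ k‖ ^ 4 = (G (circleMap 0 r θ)).re / (1 - ρ) ^ 3 := by
    intro θ
    rw [kernel_alg _ (hnb _ (Metric.sphere_subset_closedBall (hmem θ))), hn _ (hmem θ)]
  have hcG : Continuous fun θ => G (circleMap 0 r θ) := by
    rw [continuous_iff_continuousAt]
    intro θ
    exact ContinuousAt.comp (f := fun θ => circleMap 0 r θ) (g := G)
      (hdiff _ (Metric.sphere_subset_closedBall (hmem θ))).continuousAt
      (continuous_circleMap 0 r).continuousAt
  have hcR : Continuous fun θ => (G (circleMap 0 r θ)).re / (1 - ρ) ^ 3 := (Complex.continuous_re.comp hcG).div_const _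
  have hpi := Real.pi_pos
  simp_rw [hpt]
  rw [← MeasureTheory.ofReal_integral_eq_lintegral_ofReal]
  · congr 1
    rw [← integral_Ioc_eq_integral_Ioo, ← intervalIntegral.integral_of_le (by linarith),
      intervalIntegral.integral_div]
    rw [Real.circleAverage_eq_integral_add (-Real.pi)] at hav
    have e : ∫ θ in (-Real.pi)..Real.pi, (G (circleMap 0 r θ)).re = 2 * Real.pi * (1 + ρ) := by
      have h3 := Complex.reCLM.intervalIntegral_comp_comm (hcG.intervalIntegrable (-Real.pi) Real.pi) (μ := volume)
      simp only [Complex.reCLM_apply] at h3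
      rw [h3]
      have h4 : ∫ θ in (-Real.pi)..Real.pi, (G (circleMap 0 r θ)) = ((2 * Real.pi * (1 + ρ) : ℝ) : ℂ) := by
        rw [hG0, intervalIntegral.integral_comp_add_right (fun θ => G (circleMap 0 r θ)),
          show 0 + -Real.pi = -Real.pi by ring, show 2 * Real.pi + - Real.pi = Real.pi by ring,
          inv_smul_eq_iff₀ (by positivity)] at hav
        rw [hav]; simp; ring
      rw [h4, Complex.ofReal_re]
    rw [e]; ring
  · exact (hcR.integrableOn_Icc (a := -Real.pi) (b := Real.pi)).mono_set Set.Ioo_subset_Icc_self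
  · exact Filter.Eventually.of_forall fun θ => by
      simp only [Pi.zero_apply]
      rw [← hpt]; positivity

lemma radial (k : ℕ) (hk : 1 ≤ k) (b R : ℝ) (hb : 0 ≤ b) (hR : 0 ≤ R) (h : b * R ^ (2 * k) < 1) :
    ∫⁻ r in Set.Ioo 0 R, ENNReal.ofReal (r ^ (2 * k - 1) *
      (2 * Real.pi * ((1 + b * r ^ (2 * k)) / (1 - b * r ^ (2 * k)) ^ 3))) =
    ENNReal.ofReal (Real.pi / k * (R ^ (2 * k) / (1 - b * R ^ (2 * k)) ^ 2)) := by
  have hlt : ∀ r ∈ Set.Icc 0 R, 0 < 1 - b * r ^ (2 * k) := by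
    intro r hr
    have : b * r ^ (2 * k) ≤ b * R ^ (2 * k) := by
      have := hr.1; have := hr.2
      gcongr
    linarith
  have hk0 : (k : ℝ) ≠ 0 := by positivity
  have hcont : ContinuousOn (fun r : ℝ => r ^ (2 * k - 1) *
      (2 * Real.pi * ((1 + b * r ^ (2 * k)) / (1 - b * r ^ (2 * k)) ^ 3))) (Set.Icc 0 R) := by
    refine ContinuousOn.mul (by fun_prop) (ContinuousOn.mul (by fun_prop) (ContinuousOn.div (by fun_prop) (by fun_prop) ?_))
    intro r hr
    exact pow_ne_zero _ (hlt r hr).ne'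
  rw [← MeasureTheory.ofReal_integral_eq_lintegral_ofReal]
  · congr 1
    rw [← integral_Ioc_eq_integral_Ioo, ← intervalIntegral.integral_of_le hR]
    rw [intervalIntegral.integral_eq_sub_of_hasDerivAt
      (f := fun r : ℝ => Real.pi / k * (r ^ (2 * k) / (1 - b * r ^ (2 * k)) ^ 2))]
    · have : 2 * k ≠ 0 := by omega
      simp [this]
    · intro r hr
      rw [Set.uIcc_of_le hR] at hr
      have h1 := hlt r hr
      have hd : HasDerivAt (fun r : ℝ => r ^ (2 * k)) ((2 * k : ℕ) * r ^ (2 * k - 1)) r := hasDerivAt_pow _ r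
      have := (hd.div (((hd.const_mul b).const_sub 1).pow 2) (pow_ne_zero 2 h1.ne')).const_mul (Real.pi / k)
      convert! this using 1
      generalize r ^ (2 * k - 1) = u
      simp only [Pi.pow_apply]
      generalize r ^ (2 * k) = v at *
      push_cast
      field_simp
      ring
    · exact ContinuousOn.intervalIntegrable (by rwa [Set.uIcc_of_le hR])
  · exact hcont.integrableOn_Icc.mono_set Set.Ioo_subset_Icc_self
  · refine (ae_restrict_iff' measurableSet_Ioo).2 (Filter.Eventually.of_forall fun r hr => ?_)
    have h1 := hlt r ⟨hr.1.le, hr.2.le⟩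
    have := hr.1
    have := Real.pi_pos
    simp only [Pi.zero_apply]
    positivity

lemma disc (k : ℕ) (hk : 1 ≤ k) (c : ℂ) (R : ℝ) (hR : 0 ≤ R) (h : ‖c‖ * R ^ k < 1) :
    ∫⁻ z in Metric.ball (0:ℂ) R, ENNReal.ofReal (‖z‖ ^ (2 * k - 2) / ‖1 - c * z ^ k‖ ^ 4) =
    ENNReal.ofReal (Real.pi / k * (R ^ (2 * k) / (1 - ‖c‖ ^ 2 * R ^ (2 * k)) ^ 2)) := by
  have hb : ‖c‖ ^ 2 * R ^ (2 * k) < 1 := by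
    have : ‖c‖ ^ 2 * R ^ (2 * k) = (‖c‖ * R ^ k) ^ 2 := by ring
    rw [this]
    exact pow_lt_one₀ (by positivity) h two_ne_zero
  rw [← radial k hk (‖c‖ ^ 2) R (by positivity) hR hb]
  rw [← lintegral_indicator measurableSet_ball, ← Complex.lintegral_comp_polarCoord_symm, polarCoord_target]
  have hcm : Continuous fun p : ℝ × ℝ => circleMap 0 p.1 p.2 := by
    unfold circleMap; fun_prop
  have hm : Measurable fun p : ℝ × ℝ => ENNReal.ofReal (1 / ‖1 - c * (circleMap 0 p.1 p.2) ^ k‖ ^ 4) := by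
    have := hcm.measurable
    fun_prop
  have hmi : Measurable ((Set.Iio R).indicator (fun r : ℝ => ENNReal.ofReal (r ^ (2 * k - 1)))) :=
    Measurable.indicator (by fun_prop) measurableSet_Iio
  rw [setLIntegral_congr_fun (g := fun p : ℝ × ℝ =>
    (Set.Iio R).indicator (fun r : ℝ => ENNReal.ofReal (r ^ (2 * k - 1))) p.1 *
      ENNReal.ofReal (1 / ‖1 - c * (circleMap 0 p.1 p.2) ^ k‖ ^ 4)) (measurableSet_Ioi.prod measurableSet_Ioo)]
  · rw [Measure.volume_eq_prod, setLIntegral_prod _ (by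
      exact ((hmi.comp measurable_fst).mul hm).aemeasurable)]
    have e : ∀ r ∈ Set.Ioi (0:ℝ), (∫⁻ θ in Set.Ioo (-Real.pi) Real.pi,
        (Set.Iio R).indicator (fun r : ℝ => ENNReal.ofReal (r ^ (2 * k - 1))) r *
        ENNReal.ofReal (1 / ‖1 - c * (circleMap 0 r θ) ^ k‖ ^ 4)) =
        (Set.Iio R).indicator (fun r => ENNReal.ofReal (r ^ (2 * k - 1) *
      (2 * Real.pi * ((1 + ‖c‖ ^ 2 * r ^ (2 * k)) / (1 - ‖c‖ ^ 2 * r ^ (2 * k)) ^ 3)))) r := by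
      intro r hr
      have hr : 0 < r := hr
      by_cases hrR : r < R
      · have hmr : Measurable fun θ : ℝ =>
            ENNReal.ofReal (1 / ‖1 - c * (circleMap 0 r θ) ^ k‖ ^ 4) := by
          have := (continuous_circleMap 0 r).measurable
          fun_prop
        rw [lintegral_const_mul _ hmr, circ k hk c r hr]
        · simp only [Set.indicator, Set.mem_Iio, hrR, if_true]
          rw [ENNReal.ofReal_mul (p := r ^ (2 * k - 1)) (by positivity)]
        · refine lt_of_le_of_lt ?_ h
          gcongr
      · simp [hrR]
    rw [setLIntegral_congr_fun measurableSet_Ioi e, setLIntegral_indicator measurableSet_Iio,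
      Set.inter_comm, Set.Ioi_inter_Iio]
  · rintro ⟨r, θ⟩ ⟨hr, -⟩
    have hr : 0 < r := hr
    have e : Complex.polarCoord.symm (r, θ) = circleMap 0 r θ := by
      rw [Complex.polarCoord_symm_apply, circleMap, Complex.exp_mul_I]; push_cast; ring
    simp only [e, smul_eq_mul]
    have hn : ‖circleMap 0 r θ‖ = r := by simp [abs_of_pos hr]
    by_cases hrR : r < R
    · simp only [Set.indicator, Set.mem_Iio, hrR, if_true, mem_ball_zero_iff, hn]
      rw [← ENNReal.ofReal_mul hr.le, ← ENNReal.ofReal_mul (by positivity)]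
      congr 1
      rw [show 2 * k - 1 = (2 * k - 2) + 1 by omega, pow_succ]; ring
    · simp [hrR, abs_of_pos hr]

lemma slice (k : ℕ) (hk : 1 ≤ k) (w : ℂ × ℂ) (hw : w ∈ hartogsTriangle k) (y : ℂ) (hy : y ≠ 0)
    (hy1 : ‖y‖ < 1) :
    ∫⁻ x in {x : ℂ | ‖x‖ ^ k < ‖y‖}, ENNReal.ofReal (‖Pker k (x, y) w‖ ^ 2 * ‖x‖ ^ (2 * k - 2)) =
    ENNReal.ofReal (Real.pi / k / (‖w.2‖ ^ 2 * (1 - ‖w.1‖ ^ (2 * k) / ‖w.2‖ ^ 2) ^ 2)) *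
      ENNReal.ofReal (1 / ‖1 - conj w.2 * y‖ ^ 4) := by
  obtain ⟨h1, h2⟩ := hw
  have hw2 : 0 < ‖w.2‖ := lt_of_le_of_lt (by positivity) h1
  have hw20 : w.2 ≠ 0 := norm_pos_iff.1 hw2
  have hy0 : 0 < ‖y‖ := norm_pos_iff.2 hy
  set R : ℝ := ‖y‖ ^ ((k : ℝ)⁻¹) with hR
  have hRk : R ^ k = ‖y‖ := Real.rpow_inv_natCast_pow hy0.le (by omega)
  have hR0 : 0 ≤ R := by positivity
  have hset : {x : ℂ | ‖x‖ ^ k < ‖y‖} = Metric.ball 0 R := by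
    ext x
    rw [mem_ball_zero_iff, Set.mem_ofPred_eq, ← hRk, pow_lt_pow_iff_left₀ (norm_nonneg _) hR0 (by omega)]
  set c : ℂ := (conj w.1) ^ k / (y * conj w.2) with hc
  have hcn : ‖c‖ = ‖w.1‖ ^ k / (‖y‖ * ‖w.2‖) := by simp [hc]
  have hcw : conj w.2 ≠ 0 := by simpa using hw20
  have hpt : ∀ x : ℂ, ‖Pker k (x, y) w‖ ^ 2 * ‖x‖ ^ (2 * k - 2) =
      (1 / (‖y‖ ^ 2 * ‖w.2‖ ^ 2 * ‖1 - conj w.2 * y‖ ^ 4)) * (‖x‖ ^ (2 * k - 2) / ‖1 - c * x ^ k‖ ^ 4) := by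
    intro x
    have e : Pker k (x, y) w = 1 / (y * conj w.2 * (1 - conj w.2 * y) ^ 2 * (1 - c * x ^ k) ^ 2) := by
      have : y * conj w.2 - (x * conj w.1) ^ k = y * conj w.2 * (1 - c * x ^ k) := by
        rw [hc, mul_pow]; field_simp
      simp only [Pker]
      rw [this, mul_comm (conj w.2) y]
      generalize 1 - c * x ^ k = A
      generalize 1 - y * conj w.2 = B
      have : y * conj w.2 ≠ 0 := mul_ne_zero hy hcw
      generalize y * conj w.2 = D at *
      by_cases hA : A = 0
      · simp [hA]
      by_cases hB : B = 0
      · simp [hB]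
      field_simp
    rw [e]
    simp only [norm_div, norm_mul, norm_pow, norm_one, RCLike.norm_conj]
    ring
  simp_rw [hpt]
  rw [hset]
  simp_rw [ENNReal.ofReal_mul (show 0 ≤ 1 / (‖y‖ ^ 2 * ‖w.2‖ ^ 2 * ‖1 - conj w.2 * y‖ ^ 4) by positivity)]
  rw [lintegral_const_mul _ (by fun_prop), disc k hk c R hR0]
  · rw [← ENNReal.ofReal_mul (by positivity), ← ENNReal.ofReal_mul (by positivity)]
    congr 1
    rw [show R ^ (2 * k) = ‖y‖ ^ 2 by rw [← hRk]; ring, hcn]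
    have : (‖w.1‖ ^ k / (‖y‖ * ‖w.2‖)) ^ 2 * ‖y‖ ^ 2 = ‖w.1‖ ^ (2 * k) / ‖w.2‖ ^ 2 := by
      field_simp; ring
    rw [this]
    field_simp
  · rw [hcn, hRk, div_mul_eq_mul_div, div_lt_one (by positivity)]
    nlinarith

lemma full (k : ℕ) (hk : 1 ≤ k) (w : ℂ × ℂ) (hw : w ∈ hartogsTriangle k) :
    ∫ z in hartogsTriangle k, ‖Pker k z w‖ ^ 2 * ‖z.1‖ ^ (2 * k - 2) =
    Real.pi / k / (‖w.2‖ ^ 2 * (1 - ‖w.1‖ ^ (2 * k) / ‖w.2‖ ^ 2) ^ 2) *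
      (Real.pi / (1 - ‖w.2‖ ^ 2) ^ 2) := by
  have hPm : Measurable fun z : ℂ × ℂ => Pker k z w := by unfold Pker; fun_prop
  have hHm : MeasurableSet (hartogsTriangle k) :=
    MeasurableSet.inter
      (measurableSet_lt (f := fun z : ℂ × ℂ => ‖z.1‖ ^ k) (g := fun z => ‖z.2‖) (by fun_prop) (by fun_prop))
      (measurableSet_lt (f := fun z : ℂ × ℂ => ‖z.2‖) (g := fun _ => (1:ℝ)) (by fun_prop) (by fun_prop))
  have hpi := Real.pi_pos
  rw [integral_eq_lintegral_of_nonneg_ae (Filter.Eventually.of_forall fun z => by positivity)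
    (by fun_prop)]
  rw [← lintegral_indicator hHm, Measure.volume_eq_prod,
    lintegral_prod_symm' _ (Measurable.indicator (by fun_prop) hHm)]
  have hae : (fun y : ℂ => ∫⁻ x : ℂ, (hartogsTriangle k).indicator
      (fun z => ENNReal.ofReal (‖Pker k z w‖ ^ 2 * ‖z.1‖ ^ (2 * k - 2))) (x, y)) =ᵐ[volume]
      (Metric.ball (0:ℂ) 1).indicator (fun y => 
    ENNReal.ofReal (Real.pi / k / (‖w.2‖ ^ 2 * (1 - ‖w.1‖ ^ (2 * k) / ‖w.2‖ ^ 2) ^ 2)) *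
      ENNReal.ofReal (1 / ‖1 - conj w.2 * y‖ ^ 4)) := by
    have h0 : ∀ᵐ y : ℂ, y ≠ 0 := by simp [ae_iff]
    filter_upwards [h0] with y hy
    by_cases hy1 : ‖y‖ < 1
    · rw [Set.indicator_of_mem (by simpa using hy1), ← slice k hk w hw y hy hy1,
        ← lintegral_indicator (measurableSet_lt (by fun_prop) (by fun_prop))]
      congr 1; ext x
      simp [Set.indicator, hartogsTriangle, hy1]
    · simp [Set.indicator, hartogsTriangle, hy1]
  rw [lintegral_congr_ae hae, lintegral_indicator measurableSet_ball, lintegral_const_mul _ (by fun_prop)]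
  have hd := disc 1 le_rfl (conj w.2) 1 zero_le_one (by simpa using hw.2)
  simp only [mul_one, pow_one, one_pow, Nat.sub_self, pow_zero, Nat.cast_one, div_one, RCLike.norm_conj] at hd
  rw [hd, ← ENNReal.ofReal_mul (by positivity), ENNReal.toReal_ofReal (by positivity)]
  ring

noncomputable def pR (k : ℕ) (s : ℝ) : ℝ :=
  ∑ j ∈ Finset.Ico 1 k, ((j * (k - j) : ℕ) : ℝ) * s ^ (j - 1)

noncomputable def qR (k : ℕ) (s : ℝ) : ℝ :=
  ∑ j ∈ Finset.Icc 1 k, (((j ^ 2 : ℕ) : ℝ) + (((k - j) ^ 2 : ℕ) : ℝ) * s ^ k) * s ^ (j - 1)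

lemma pR_mono (k : ℕ) (s : ℝ) (h0 : 0 ≤ s) (h1 : s ≤ 1) : pR k s ≤ pR k 1 := by
  unfold pR; gcongr

lemma qR_mono (k : ℕ) (s : ℝ) (h0 : 0 ≤ s) (h1 : s ≤ 1) : qR k s ≤ qR k 1 := by
  unfold qR; gcongr

lemma pR_nonneg (k : ℕ) (s : ℝ) (h0 : 0 ≤ s) : 0 ≤ pR k s := by
  unfold pR; positivity

lemma qR_ge (k : ℕ) (hk : 1 ≤ k) (s : ℝ) (h0 : 0 ≤ s) : 1 ≤ qR k s := by
  unfold qR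
  refine le_trans ?_ (Finset.single_le_sum (f := fun j : ℕ => (((j ^ 2 : ℕ) : ℝ) + (((k - j) ^ 2 : ℕ) : ℝ) * s ^ k) * s ^ (j - 1)) (fun j _ => by positivity) (Finset.mem_Icc.2 ⟨le_rfl, hk⟩))
  simp; positivity

lemma berg (k : ℕ) (w : ℂ × ℂ) : (bergmanHk k w w).re =
    (pR k (‖w.1‖ ^ 2) * (‖w.2‖ ^ 2) ^ 2 + qR k (‖w.1‖ ^ 2) * ‖w.2‖ ^ 2 + (‖w.1‖ ^ 2) ^ k * pR k (‖w.1‖ ^ 2)) /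
    (k * Real.pi ^ 2 * (1 - ‖w.2‖ ^ 2) ^ 2 * (‖w.2‖ ^ 2 - (‖w.1‖ ^ 2) ^ k) ^ 2) := by
  rw [← Complex.ofReal_re (_ / _)]
  congr 1
  simp only [bergmanHk, Complex.mul_conj, Complex.normSq_eq_norm_sq, pPoly, qPoly, pR, qR]
  push_cast
  rfl

/-- For `dμ(z) = |z₁|^{2k-2} dV(z)` on `ℍ_k`, `T_μ ≈ 1`: there are constants
`0 < c₁ ≤ c₂` (depending only on `k`) with `c₁ ≤ T_μ(w) ≤ c₂` for all `w ∈ ℍ_k`. -/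
theorem stmt18 (k : ℕ) (hk : 1 ≤ k) :
    ∃ c₁ c₂ : ℝ, 0 < c₁ ∧ c₁ ≤ c₂ ∧
      ∀ w ∈ hartogsTriangle k, c₁ ≤ Tmu k w ∧ Tmu k w ≤ c₂ := by
  have hpi := Real.pi_pos
  have hq1 := qR_ge k hk 1 zero_le_one
  have hp1 := pR_nonneg k 1 zero_le_one
  refine ⟨Real.pi ^ 4 / (2 * pR k 1 + qR k 1), Real.pi ^ 4, by positivity,
    div_le_self (by positivity) (by linarith), ?_⟩
  intro w hw
  have key : Tmu k w = Real.pi ^ 4 * ‖w.2‖ ^ 2 / (pR k (‖w.1‖ ^ 2) * (‖w.2‖ ^ 2) ^ 2 + qR k (‖w.1‖ ^ 2) * ‖w.2‖ ^ 2 + (‖w.1‖ ^ 2) ^ k * pR k (‖w.1‖ ^ 2)) := by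
    have e : Tmu k w = (∫ z in hartogsTriangle k, ‖Pker k z w‖ ^ 2 * ‖z.1‖ ^ (2 * k - 2)) / (bergmanHk k w w).re := by
      unfold Tmu
      rw [← integral_div]
      congr 1; ext z; ring
    rw [e, full k hk w hw, berg]
    obtain ⟨h1, h2⟩ := hw
    have hw2 : 0 < ‖w.2‖ := lt_of_le_of_lt (by positivity) h1
    have a1 : 1 - ‖w.2‖ ^ 2 ≠ 0 := by nlinarith
    have e3 : (‖w.1‖ ^ 2) ^ k = ‖w.1‖ ^ (2 * k) := by rw [← pow_mul]
    have a2 : ‖w.2‖ ^ 2 - ‖w.1‖ ^ (2 * k) ≠ 0 := by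
      have : ‖w.1‖ ^ (2 * k) = (‖w.1‖ ^ k) ^ 2 := by ring
      rw [this]
      have : (‖w.1‖ ^ k) ^ 2 < ‖w.2‖ ^ 2 := pow_lt_pow_left₀ h1 (by positivity) two_ne_zero
      linarith
    have e4 : 1 - ‖w.1‖ ^ (2 * k) / ‖w.2‖ ^ 2 = (‖w.2‖ ^ 2 - ‖w.1‖ ^ (2 * k)) / ‖w.2‖ ^ 2 := by
      field_simp
    rw [e3, e4]
    have hk0 : (k : ℝ) ≠ 0 := by positivity
    generalize pR k (‖w.1‖ ^ 2) * (‖w.2‖ ^ 2) ^ 2 + qR k (‖w.1‖ ^ 2) * ‖w.2‖ ^ 2 + ‖w.1‖ ^ (2 * k) * pR k (‖w.1‖ ^ 2) = N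
    generalize ‖w.2‖ ^ 2 - ‖w.1‖ ^ (2 * k) = A at *
    generalize 1 - ‖w.2‖ ^ 2 = B at *
    field_simp
  obtain ⟨h1, h2⟩ := hw
  have hw2 : 0 < ‖w.2‖ := lt_of_le_of_lt (by positivity) h1
  have hw1 : ‖w.1‖ < 1 := by
    by_contra hcon
    have := one_le_pow₀ (n := k) (not_lt.1 hcon)
    linarith
  have hs0 : 0 ≤ ‖w.1‖ ^ 2 := by positivity
  have hs1 : ‖w.1‖ ^ 2 ≤ 1 := pow_le_one₀ (norm_nonneg _) hw1.le
  have hst : (‖w.1‖ ^ 2) ^ k ≤ ‖w.2‖ ^ 2 := by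
    rw [← pow_mul, mul_comm, pow_mul]
    exact pow_le_pow_left₀ (by positivity) h1.le 2
  have ht1 : ‖w.2‖ ^ 2 ≤ 1 := pow_le_one₀ (norm_nonneg _) h2.le
  have ht0 : 0 < ‖w.2‖ ^ 2 := by positivity
  have hsk : 0 ≤ (‖w.1‖ ^ 2) ^ k := by positivity
  have hp := pR_mono k _ hs0 hs1
  have hq := qR_mono k _ hs0 hs1
  have hp0 := pR_nonneg k _ hs0
  have hq0 := qR_ge k hk _ hs0
  rw [key]
  clear key
  generalize pR k (‖w.1‖ ^ 2) = p at *
  generalize qR k (‖w.1‖ ^ 2) = q at *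
  generalize pR k 1 = P at *
  generalize qR k 1 = Q at *
  generalize (‖w.1‖ ^ 2) ^ k = s at *
  generalize ‖w.2‖ ^ 2 = t at *
  have hN1 : t ≤ p * t ^ 2 + q * t + s * p := by
    have : 0 ≤ p * t ^ 2 := by positivity
    have : 0 ≤ s * p := by positivity
    nlinarith
  have hN2 : p * t ^ 2 + q * t + s * p ≤ (2 * P + Q) * t := by
    have b1 : p * t ^ 2 ≤ P * t := by
      have : t ^ 2 ≤ t := by nlinarith
      gcongr
    have b2 : q * t ≤ Q * t := by gcongr
    have b3 : s * p ≤ t * P := by gcongr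
    linarith
  have hN : 0 < p * t ^ 2 + q * t + s * p := lt_of_lt_of_le ht0 hN1
  constructor
  · rw [div_le_div_iff₀ (by positivity) hN]
    nlinarith [mul_le_mul_of_nonneg_left hN2 (show 0 ≤ Real.pi ^ 4 by positivity)]
  · rw [div_le_iff₀ hN]
    gcongr
end
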